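/- arXiv:1403.1591 — 4 statements merged into one kernel-verified Lean document; each statement's English description precedes it below -/
import Mathlib

section
/- Let I be a finite set with N elements, let 𝒜 be a downward-closed family of subsets of I, let m₀ be an integer with 0 ≤ m₀ ≤ N, let ε₀ > 0, and set ρ₀ = m₀/N + ε₀, assuming ρ₀ ≤ 1. Then P_{Unif(m₀)}(𝒜) ≥ P_{Ber(ρ₀)}(𝒜) − exp(−2 N ε₀²), i.e., (#{S ∈ 𝒜 : |S| = m₀}) / C(N, m₀) ≥ Σ_{S ∈ 𝒜} ρ₀^{|S|} (1 − ρ₀)^{N − |S|} − exp(−2 N ε₀²). -/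
/-!
By the local LYM inequality, the density of a downward-closed family `𝒜` among the `k`-sets is
antitone in `k`. Conditioning the `p`-random set on its size exhibits its probability of lying in
`𝒜` as the average of this density over `k ∼ Bin(N, p)`. The sizes `k ≥ m` contribute at most the
density at `m`, while the sizes `k < m` contribute at most the lower tail of the binomial
distribution, which Hoeffding's inequality bounds.
-/

section SliceDensity

open scoped Finset FinsetFamily

variable {ι : Type*}

lemma shadow_slice_succ_subset_slice [DecidableEq ι] {𝒜 : Finset (Finset ι)}
    (h𝒜 : IsLowerSet (𝒜 : Set (Finset ι))) (k : ℕ) : ∂ (𝒜 # (k + 1)) ⊆ 𝒜 # k := by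
  intro T hT
  obtain ⟨S, hS, a, ha, rfl⟩ := Finset.mem_shadow_iff.1 hT
  obtain ⟨hS𝒜, hcard⟩ := Finset.mem_slice.1 hS
  exact Finset.mem_slice.2
    ⟨h𝒜 (Finset.erase_subset a S) hS𝒜, by
      rw [Finset.card_erase_of_mem ha, hcard, Nat.add_sub_cancel]⟩

variable [Fintype ι]

/-- The proportion of the `k`-element subsets of `ι` that lie in `𝒜`, i.e. the probability of `𝒜`
under the uniform model on `k`-sets. It takes the value `0 / 0 = 0` when `k > Fintype.card ι`. -/
noncomputable def sliceDensity (𝒜 : Finset (Finset ι)) (k : ℕ) : ℝ :=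
  #(𝒜 # k) / (Fintype.card ι).choose k

lemma sliceDensity_nonneg (𝒜 : Finset (Finset ι)) (k : ℕ) : 0 ≤ sliceDensity 𝒜 k := by
  unfold sliceDensity
  positivity

lemma sliceDensity_le_one (𝒜 : Finset (Finset ι)) (k : ℕ) : sliceDensity 𝒜 k ≤ 1 :=
  div_le_one_of_le₀ (mod_cast Finset.sized_slice.card_le) (Nat.cast_nonneg _)

lemma antitone_sliceDensity {𝒜 : Finset (Finset ι)} (h𝒜 : IsLowerSet (𝒜 : Set (Finset ι))) :
    Antitone (sliceDensity 𝒜) := by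
  classical
  refine antitone_nat_of_succ_le fun k ↦ ?_
  calc sliceDensity 𝒜 (k + 1)
    _ ≤ #(∂ (𝒜 # (k + 1))) / (Fintype.card ι).choose k :=
        Finset.local_lubell_yamamoto_meshalkin_inequality_div k.succ_ne_zero Finset.sized_slice
    _ ≤ sliceDensity 𝒜 k := by
        unfold sliceDensity
        gcongr
        exact shadow_slice_succ_subset_slice h𝒜 k

end SliceDensity

section Binomial

open MeasureTheory ProbabilityTheory unitInterval
open scoped Finset NNReal

lemma integral_le_measureReal_Iio_add {α : Type*} [MeasurableSpace α] [LinearOrder α]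
    [TopologicalSpace α] [OrderClosedTopology α] [OpensMeasurableSpace α] (μ : Measure α)
    [IsProbabilityMeasure μ] {f : α → ℝ} (hf : Antitone f) (hf₀ : 0 ≤ f) (hf₁ : f ≤ 1) (m : α) :
    ∫ x, f x ∂μ ≤ μ.real (Set.Iio m) + f m := by
  have hind : Integrable ((Set.Iio m).indicator (1 : α → ℝ)) μ :=
    (integrable_const 1).indicator measurableSet_Iio
  have hle (x : α) : f x ≤ (Set.Iio m).indicator 1 x + f m := by
    rcases lt_or_ge x m with hx | hx
    · simpa [hx] using (hf₁ x).trans (le_add_of_nonneg_right (hf₀ m))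
    · simpa [hx] using hf hx
  calc ∫ x, f x ∂μ
    _ ≤ ∫ x, ((Set.Iio m).indicator 1 x + f m) ∂μ :=
        integral_mono_of_nonneg (.of_forall hf₀) (hind.add (integrable_const _)) (.of_forall hle)
    _ = μ.real (Set.Iio m) + f m := by
        rw [integral_add hind (integrable_const _), integral_indicator_one measurableSet_Iio]
        simp

lemma hasSubgaussianMGF_bernoulliMeasure (p : I) :
    HasSubgaussianMGF (fun x : ℝ ↦ x - p) (1 / 4) Ber(1, 0, p) := by
  have hmem : ∀ᵐ x ∂Ber((1 : ℝ), 0, p), x ∈ Set.Icc (0 : ℝ) 1 :=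
    (mem_ae_iff_prob_eq_one measurableSet_Icc).2
      (bernoulliMeasure_apply_of_mem_of_mem p measurableSet_Icc (by simp) (by simp))
  convert! hasSubgaussianMGF_of_mem_Icc aemeasurable_id hmem using 1
  · simp [integral_bernoulliMeasure]
  · norm_num

lemma mgf_binomial_sub_mul (n : ℕ) (p : I) (t : ℝ) :
    mgf (fun k : ℕ ↦ (k : ℝ) - n * p) Bin(n, p) t =
      mgf (fun x : ℝ ↦ x - p) Ber(1, 0, p) t ^ n := by
  simp only [mgf, integral_binomial, integral_bernoulliMeasure, smul_eq_mul, add_pow,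
    Nat.range_succ_eq_Iic]
  refine Finset.sum_congr rfl fun k hk ↦ ?_
  have hexp : Real.exp (t * (k - n * p)) =
      Real.exp (t * (1 - p)) ^ k * Real.exp (t * (0 - p)) ^ (n - k) := by
    rw [← Real.exp_nat_mul, ← Real.exp_nat_mul, ← Real.exp_add,
      Nat.cast_sub (Finset.mem_Iic.1 hk)]
    ring_nf
  rw [hexp, mul_pow, mul_pow]
  ring

lemma hasSubgaussianMGF_binomial (n : ℕ) (p : I) :
    HasSubgaussianMGF (fun k : ℕ ↦ (k : ℝ) - n * p) (n / 4) Bin(n, p) where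
  integrable_exp_mul _ := integrable_binomial _
  mgf_le t := by
    calc mgf (fun k : ℕ ↦ (k : ℝ) - n * p) Bin(n, p) t
      _ = mgf (fun x : ℝ ↦ x - p) Ber(1, 0, p) t ^ n := mgf_binomial_sub_mul n p t
      _ ≤ Real.exp ((1 / 4 : ℝ≥0) * t ^ 2 / 2) ^ n := by
          gcongr
          · exact mgf_nonneg
          · exact (hasSubgaussianMGF_bernoulliMeasure p).mgf_le t
      _ = Real.exp ((n / 4 : ℝ≥0) * t ^ 2 / 2) := by
          rw [← Real.exp_nat_mul]
          push_cast
          ring_nf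

lemma binomial_real_setOf_le_mul_sub_le_exp (n : ℕ) (p : I) {ε : ℝ} (hε : 0 ≤ ε) :
    Bin(n, p).real {k | (k : ℝ) ≤ n * (p - ε)} ≤ Real.exp (-2 * n * ε ^ 2) := by
  have hset : {k : ℕ | (k : ℝ) ≤ n * (p - ε)} = {k : ℕ | n * ε ≤ -((k : ℝ) - n * p)} := by
    ext k
    simp only [Set.mem_ofPred_eq]
    constructor <;> intro h <;> linarith
  rw [hset]
  refine ((hasSubgaussianMGF_binomial n p).neg.measure_ge_le (by positivity)).trans_eq ?_
  congr 1
  rcases n.eq_zero_or_pos with rfl | hn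
  · simp
  · push_cast
    field_simp
    ring

lemma binomial_real_Iio_le_exp {n m : ℕ} (p : I) {ε : ℝ} (hε : 0 ≤ ε)
    (hm : (m : ℝ) ≤ n * (p - ε)) :
    Bin(n, p).real (Set.Iio m) ≤ Real.exp (-2 * n * ε ^ 2) :=
  (measureReal_mono fun _ hk ↦ (Nat.cast_le.2 (Set.mem_Iio.1 hk).le).trans hm).trans
    (binomial_real_setOf_le_mul_sub_le_exp n p hε)

variable {ι : Type*} [Fintype ι]

lemma sum_pow_card_mul_pow_eq_integral_sliceDensity (𝒜 : Finset (Finset ι)) (p : I) :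
    ∑ S ∈ 𝒜, (p : ℝ) ^ #S * (1 - p) ^ (Fintype.card ι - #S) =
      ∫ k, sliceDensity 𝒜 k ∂Bin(Fintype.card ι, p) := by
  rw [integral_binomial, ← Finset.sum_fiberwise_of_maps_to (g := Finset.card)
    fun S _ ↦ Finset.mem_Iic.2 S.card_le_univ]
  refine Finset.sum_congr rfl fun k hk ↦ ?_
  have hchoose : ((Fintype.card ι).choose k : ℝ) ≠ 0 :=
    mod_cast (Nat.choose_pos (Finset.mem_Iic.1 hk)).ne'
  calc ∑ S ∈ 𝒜 with #S = k, (p : ℝ) ^ #S * (1 - p) ^ (Fintype.card ι - #S)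
    _ = ∑ S ∈ 𝒜 # k, (p : ℝ) ^ k * (1 - p) ^ (Fintype.card ι - k) :=
        Finset.sum_congr rfl fun S hS ↦ by rw [(Finset.mem_slice.1 hS).2]
    _ = ((Fintype.card ι).choose k * (p : ℝ) ^ k * (1 - p) ^ (Fintype.card ι - k)) •
          sliceDensity 𝒜 k := by
        rw [Finset.sum_const, nsmul_eq_mul, smul_eq_mul, sliceDensity]
        field_simp

lemma sum_pow_card_mul_pow_le_binomial_real_Iio_add_sliceDensity {𝒜 : Finset (Finset ι)}
    (h𝒜 : IsLowerSet (𝒜 : Set (Finset ι))) (p : I) (m : ℕ) :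
    ∑ S ∈ 𝒜, (p : ℝ) ^ #S * (1 - p) ^ (Fintype.card ι - #S) ≤
      Bin(Fintype.card ι, p).real (Set.Iio m) + sliceDensity 𝒜 m := by
  rw [sum_pow_card_mul_pow_eq_integral_sliceDensity]
  exact integral_le_measureReal_Iio_add _ (antitone_sliceDensity h𝒜) (sliceDensity_nonneg 𝒜)
    (sliceDensity_le_one 𝒜) m

end Binomial

/-- For a downward-closed family `𝒜` of subsets of an `N`-element set,
`m₀ ≤ N`, `ε₀ > 0`, and `ρ₀ = m₀/N + ε₀ ≤ 1`, one has
`P_{Unif(m₀)}(𝒜) ≥ P_{Ber(ρ₀)}(𝒜) − exp(−2 N ε₀²)`. -/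
theorem unif_ge_bernoulli_sub_exp {ι : Type*} [Fintype ι] [DecidableEq ι]
    (𝒜 : Finset (Finset ι))
    (hdc : ∀ S ∈ 𝒜, ∀ S' ⊆ S, S' ∈ 𝒜)
    (m₀ : ℕ) (hm₀ : m₀ ≤ Fintype.card ι)
    (ε₀ ρ₀ : ℝ) (hε₀ : 0 < ε₀)
    (hρ₀ : ρ₀ = (m₀ : ℝ) / (Fintype.card ι : ℝ) + ε₀) (hρ₀1 : ρ₀ ≤ 1) :
    (∑ S ∈ 𝒜, ρ₀ ^ S.card * (1 - ρ₀) ^ (Fintype.card ι - S.card))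
        - Real.exp (-2 * (Fintype.card ι : ℝ) * ε₀ ^ 2)
      ≤ ((𝒜.filter (fun S => S.card = m₀)).card : ℝ) / ((Fintype.card ι).choose m₀ : ℝ) := by
  have h𝒜 : IsLowerSet (𝒜 : Set (Finset ι)) := fun S S' hS' hS ↦ hdc S hS S' hS'
  have hm₀_eq : (Fintype.card ι : ℝ) * (ρ₀ - ε₀) = m₀ := by
    rw [hρ₀, add_sub_cancel_right]
    refine mul_div_cancel_of_imp' fun hN ↦ ?_
    norm_cast at hN ⊢
    omega
  let p : unitInterval := ⟨ρ₀, by rw [hρ₀]; positivity, hρ₀1⟩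
  have hmixture := sum_pow_card_mul_pow_le_binomial_real_Iio_add_sliceDensity h𝒜 p m₀
  have htail := binomial_real_Iio_le_exp p hε₀.le hm₀_eq.ge
  exact sub_le_iff_le_add'.2 (hmixture.trans (add_le_add htail le_rfl))
end

section
/- Let k ≥ 1 and let i₁, i₂, …, i_k be a closed walk on a vertex set V, that is, a sequence of vertices whose k steps are the unordered pairs {i₁, i₂}, {i₂, i₃}, …, {i_{k−1}, i_k}, {i_k, i₁} (loops, where a step has both endpoints equal, are allowed). Let p be the number of distinct vertices among i₁, …, i_k. If p > k/2 + 1, then some unordered edge occurs exactly once among the k steps of the walk. -/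
/-!
Read the walk from its end: prepending a vertex that has not been visited before also prepends an
edge that has not been traversed before. So a walk, closed or not, visits at most one more vertex
than it has distinct edges. If every edge occurred at least twice among the `k` steps, there would
be at most `k / 2` distinct edges, hence at most `k / 2 + 1` vertices.
-/

open Finset

section Walk

variable {V : Type*} {k : ℕ}

/-- The unordered edge traversed at step `t` of the walk `f 0, …, f k`. The walk has `k` steps and
need not be closed; any two vertices may be consecutive, and a loop is a diagonal element of
`Sym2 V`. -/
def walkStep (f : Fin (k + 1) → V) (t : Fin k) : Sym2 V :=
  s(f t.castSucc, f t.succ)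

theorem walkStep_zero (f : Fin (k + 2) → V) : walkStep f 0 = s(f 0, f 1) := rfl

theorem tail_walkStep (f : Fin (k + 2) → V) :
    Fin.tail (walkStep f) = walkStep (Fin.tail f) := rfl

theorem mem_range_of_mem_walkStep {f : Fin (k + 1) → V} {t : Fin k} {v : V}
    (hv : v ∈ walkStep f t) : v ∈ Set.range f := by
  rcases Sym2.mem_iff.1 hv with rfl | rfl <;> exact Set.mem_range_self _

theorem image_univ_fin_succ {α : Type*} [DecidableEq α] (g : Fin (k + 1) → α) :
    univ.image g = insert (g 0) (univ.image (Fin.tail g)) := by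
  rw [Fin.univ_succ, cons_eq_insert, image_insert, map_eq_image, image_image]
  rfl

variable [DecidableEq V]

theorem card_image_le_card_image_walkStep_add_one (f : Fin (k + 1) → V) :
    #(univ.image f) ≤ #(univ.image (walkStep f)) + 1 := by
  induction k with
  | zero => simp
  | succ k ih =>
    rw [image_univ_fin_succ f, image_univ_fin_succ (walkStep f), walkStep_zero, tail_walkStep]
    by_cases hf : f 0 ∈ univ.image (Fin.tail f)
    · rw [insert_eq_of_mem hf]
      exact (ih _).trans (by gcongr; exact subset_insert _ _)
    · have new_step : s(f 0, f 1) ∉ univ.image (walkStep (Fin.tail f)) := by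
        intro hmem
        obtain ⟨t, -, ht⟩ := mem_image.1 hmem
        have : f 0 ∈ walkStep (Fin.tail f) t := ht ▸ Sym2.mem_mk_left (f 0) (f 1)
        exact hf (mem_image_univ_iff_mem_range.2 (mem_range_of_mem_walkStep this))
      rw [card_insert_of_notMem hf, card_insert_of_notMem new_step]
      gcongr
      exact ih _

theorem exists_card_walkStep_eq_lt {m : ℕ} (f : Fin (k + 1) → V)
    (hf : k + m < #(univ.image f) * m) :
    ∃ t, #{u | walkStep f u = walkStep f t} < m := by
  have hcard : #(univ : Finset (Fin k)) < #(univ.image (walkStep f)) * m := by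
    have := Nat.mul_le_mul_right m (card_image_le_card_image_walkStep_add_one f)
    rw [card_fin]
    linarith
  obtain ⟨e, he, hlt⟩ := exists_card_fiber_lt_of_card_lt_mul hcard
  obtain ⟨t, -, rfl⟩ := mem_image.1 he
  exact ⟨t, hlt⟩

theorem closed_walk_edge_multiplicity_one_general (f : Fin (k + 1) → V)
    (hf : (#(univ.image f) : ℝ) > (k : ℝ) / 2 + 1) :
    ∃ t, #{u | walkStep f u = walkStep f t} = 1 := by
  have hf' : k + 2 < #(univ.image f) * 2 := by
    have : (k : ℝ) + 2 < #(univ.image f) * 2 := by linarith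
    exact_mod_cast this
  obtain ⟨t, ht⟩ := exists_card_walkStep_eq_lt f hf'
  have hpos : 0 < #{u | walkStep f u = walkStep f t} := card_pos.2 ⟨t, by simp⟩
  exact ⟨t, by omega⟩

end Walk

section CyclicClosure

variable {V : Type*} {k : ℕ} [NeZero k]

/-- The closed walk `i 0, …, i (k - 1), i 0` given by a cyclic sequence of `k` vertices, written
with its starting vertex repeated at the end (`Fin.ofNat` reduces the last index `k` to `0`). -/
def cyclicClosure (i : Fin k → V) (j : Fin (k + 1)) : V :=
  i (Fin.ofNat k j)

theorem cyclicClosure_castSucc (i : Fin k → V) (t : Fin k) :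
    cyclicClosure i t.castSucc = i t := by
  simp [cyclicClosure]

theorem cyclicClosure_succ (i : Fin k → V) (t : Fin k) :
    cyclicClosure i t.succ = i (t + 1) := by
  refine congrArg i (Fin.ext ?_)
  simp [Fin.val_add]

theorem walkStep_cyclicClosure (i : Fin k → V) (t : Fin k) :
    walkStep (cyclicClosure i) t = s(i t, i (t + 1)) := by
  rw [walkStep, cyclicClosure_castSucc, cyclicClosure_succ]

theorem image_cyclicClosure [DecidableEq V] (i : Fin k → V) :
    univ.image (cyclicClosure i) = univ.image i := by
  ext v
  rw [mem_image_univ_iff_mem_range, mem_image_univ_iff_mem_range]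
  constructor
  · rintro ⟨j, rfl⟩
    exact ⟨Fin.ofNat k j, rfl⟩
  · rintro ⟨t, rfl⟩
    exact ⟨t.castSucc, cyclicClosure_castSucc i t⟩

end CyclicClosure

/-- Let `i₁, …, i_k` (`k ≥ 1`) be a closed walk on a vertex set `V`, with
steps the unordered pairs `{i_t, i_{t+1}}` (indices cyclic, loops allowed).  If the number
`p` of distinct vertices of the walk satisfies `p > k/2 + 1`, then some unordered edge
occurs exactly once among the `k` steps of the walk. -/
theorem closed_walk_edge_multiplicity_one {V : Type*} [DecidableEq V]
    (k : ℕ) [NeZero k] (i : Fin k → V)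
    (hp : ((Finset.univ.image i).card : ℝ) > (k : ℝ) / 2 + 1) :
    ∃ t : Fin k,
      (Finset.univ.filter (fun u : Fin k => s(i u, i (u + 1)) = s(i t, i (t + 1)))).card = 1 := by
  rw [← image_cyclicClosure] at hp
  simpa only [walkStep_cyclicClosure] using closed_walk_edge_multiplicity_one_general _ hp
end

section
/- Let H be a real or complex Hilbert space and let P and Q be orthogonal projections on H. If the operator norm of the composition Q ∘ P satisfies ‖Q ∘ P‖ ≤ 1/4, then for every h ∈ H, ‖Q h‖ ≤ (1/3) ‖h − Q h‖ + (4/3) ‖h − P h‖. -/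
section OperatorBounds

variable {𝕜 E F : Type*} [NontriviallyNormedField 𝕜]
  [SeminormedAddCommGroup E] [NormedSpace 𝕜 E] [SeminormedAddCommGroup F] [NormedSpace 𝕜 F]

theorem norm_apply_le_opNorm_comp_mul_add (P : E →L[𝕜] E) (Q : E →L[𝕜] F) (h : E) :
    ‖Q h‖ ≤ ‖Q.comp P‖ * ‖h‖ + ‖Q‖ * ‖h - P h‖ :=
  calc ‖Q h‖ = ‖Q.comp P h + Q (h - P h)‖ := by simp
    _ ≤ ‖Q.comp P h‖ + ‖Q (h - P h)‖ := norm_add_le _ _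
    _ ≤ ‖Q.comp P‖ * ‖h‖ + ‖Q‖ * ‖h - P h‖ :=
        add_le_add ((Q.comp P).le_opNorm h) (Q.le_opNorm (h - P h))

theorem proj_norm_bound_general (P Q : E →L[𝕜] E) {c K : ℝ} (hc : c < 1)
    (hQP : ‖Q.comp P‖ ≤ c) (hQ : ‖Q‖ ≤ K) (h : E) :
    ‖Q h‖ ≤ c / (1 - c) * ‖h - Q h‖ + K / (1 - c) * ‖h - P h‖ := by
  have hc₀ : 0 ≤ c := (norm_nonneg _).trans hQP
  have hself : ‖Q h‖ ≤ c * (‖Q h‖ + ‖h - Q h‖) + K * ‖h - P h‖ :=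
    calc ‖Q h‖ ≤ ‖Q.comp P‖ * ‖h‖ + ‖Q‖ * ‖h - P h‖ := norm_apply_le_opNorm_comp_mul_add P Q h
      _ ≤ c * (‖Q h‖ + ‖h - Q h‖) + K * ‖h - P h‖ := by
          gcongr
          exact norm_le_norm_add_norm_sub' h (Q h)
  -- As `c < 1`, the term `c * ‖Q h‖` in `hself` is absorbed into the left-hand side.
  rw [div_mul_eq_mul_div, div_mul_eq_mul_div, ← add_div, le_div_iff₀ (sub_pos.2 hc)]
  linarith

end OperatorBounds

/-- Let `P` and `Q` be orthogonal projections on a real or complex Hilbert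
space `H` with `‖Q ∘ P‖ ≤ 1/4`.  Then for every `h ∈ H`,
`‖Q h‖ ≤ (1/3) ‖h − Q h‖ + (4/3) ‖h − P h‖`. -/
theorem proj_norm_bound {𝕜 : Type*} [RCLike 𝕜] {H : Type*} [NormedAddCommGroup H]
    [InnerProductSpace 𝕜 H] [CompleteSpace H]
    (P Q : H →L[𝕜] H)
    (hPidem : P.comp P = P) (hPsa : IsSelfAdjoint P)
    (hQidem : Q.comp Q = Q) (hQsa : IsSelfAdjoint Q)
    (hQP : ‖Q.comp P‖ ≤ 1 / 4) :
    ∀ h : H, ‖Q h‖ ≤ (1 / 3) * ‖h - Q h‖ + (4 / 3) * ‖h - P h‖ := by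
  intro h
  have hQ : ‖Q‖ ≤ 1 := IsStarProjection.norm_le Q ⟨hQidem, hQsa⟩
  convert proj_norm_bound_general P Q (by norm_num) hQP hQ h using 3 <;> norm_num
end

section
/- Let B be a real random variable with E[B] = 0 and E[B^p] ≤ (2Kp)^p for every integer p ≥ 2, where K > 0. Then for every t with 0 ≤ t ≤ 1/(4eK), E[exp(tB)] ≤ exp(4 e² t² K²). -/
open MeasureTheory

/-! Expand `E[exp X]`, `X = tB`, into the moment series `∑ E[X ^ p] / p!`. Since even powers are
nonnegative, the upper bounds on the even moments alone make `cosh X` integrable; as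
`exp |X| ≤ 2 cosh X`, this dominates the whole exponential series and justifies the exchange of sum
and integral without any lower bound on the odd moments. Stirling's inequality gives
`p ^ p / p! ≤ e ^ p / 2`, so with `x = 2eKt ≤ 1/2` the terms of order `p ≥ 2` are at most
`x ^ p / 2` and sum to at most `x ^ 2`, whence
`E[exp X] ≤ 1 + t E[B] + x ^ 2 ≤ exp (t E[B] + x ^ 2)`.
-/

open Filter
open scoped Nat

section RealEstimates

lemma mul_natCast_pow_div_factorial_le {a : ℝ} (ha : 0 ≤ a) {n : ℕ} (hn : n ≠ 0) :
    (a * n) ^ n / n ! ≤ (Real.exp 1 * a) ^ n / 2 := by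
  have two_le_sqrt : 2 ≤ √(2 * Real.pi * n) := by
    have one_le : (1 : ℝ) ≤ n := by exact_mod_cast Nat.one_le_iff_ne_zero.mpr hn
    exact Real.le_sqrt_of_sq_le (by nlinarith [Real.pi_gt_three])
  have two_mul_le_factorial : 2 * (n / Real.exp 1) ^ n ≤ (n ! : ℝ) :=
    (mul_le_mul_of_nonneg_right two_le_sqrt (by positivity)).trans
      (Stirling.le_factorial_stirling n)
  rw [div_le_iff₀ (by positivity)]
  calc (a * n) ^ n = (Real.exp 1 * a) ^ n / 2 * (2 * (n / Real.exp 1) ^ n) := by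
        rw [div_pow, mul_pow, mul_pow]
        field_simp
    _ ≤ (Real.exp 1 * a) ^ n / 2 * n ! := by gcongr

lemma le_sum_range_add_geometric_of_hasSum {a : ℕ → ℝ} {s c x : ℝ} (ha : HasSum a s)
    (hx0 : 0 ≤ x) (hx1 : x < 1) {k : ℕ} (hle : ∀ n, k ≤ n → a n ≤ c * x ^ n) :
    s ≤ ∑ n ∈ Finset.range k, a n + c * x ^ k / (1 - x) := by
  have tail_le : s - ∑ n ∈ Finset.range k, a n ≤ c * x ^ k * (1 - x)⁻¹ := by
    refine hasSum_le (fun n => ?_) ((hasSum_nat_add_iff' k).mpr ha)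
      ((hasSum_geometric_of_lt_one hx0 hx1).mul_left (c * x ^ k))
    exact (hle (n + k) (Nat.le_add_left k n)).trans_eq (by ring)
  rw [div_eq_mul_inv]
  linarith

end RealEstimates

section ExponentialSeries

variable {Ω : Type*} [MeasurableSpace Ω] {μ : Measure Ω}

lemma integrable_of_hasSum_of_summable_integral_norm {ι E : Type*} [Countable ι]
    [NormedAddCommGroup E] {F : ι → Ω → E} {f : Ω → E} (hF : ∀ i, Integrable (F i) μ)
    (hsum : Summable fun i => ∫ ω, ‖F i ω‖ ∂μ) (hf : ∀ᵐ ω ∂μ, HasSum (F · ω) (f ω)) :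
    Integrable f μ := by
  have hf_meas : AEStronglyMeasurable f μ := by
    refine aestronglyMeasurable_of_tendsto_ae atTop
      (f := fun (s : Finset ι) ω => ∑ i ∈ s, F i ω)
      (fun s => s.aestronglyMeasurable_fun_sum fun i _ => (hF i).aestronglyMeasurable) ?_
    filter_upwards [hf] with ω hω using hω
  refine ⟨hf_meas, ?_⟩
  calc ∫⁻ ω, ‖f ω‖ₑ ∂μ ≤ ∫⁻ ω, ∑' i, ‖F i ω‖ₑ ∂μ := by
        refine lintegral_mono_ae ?_
        filter_upwards [hf] with ω hω
        exact hω.tsum_eq ▸ enorm_tsum_le_tsum_enorm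
    _ = ∑' i, ∫⁻ ω, ‖F i ω‖ₑ ∂μ :=
        lintegral_tsum fun i => (hF i).aestronglyMeasurable.enorm
    _ = ∑' i, ENNReal.ofReal (∫ ω, ‖F i ω‖ ∂μ) := by
        simp_rw [ofReal_integral_norm_eq_lintegral_enorm (hF _)]
    _ < ⊤ := hsum.tsum_ofReal_lt_top

variable {X : Ω → ℝ}

lemma integral_const_mul_pow_div_factorial_le {a t : ℝ} (ha : 0 ≤ a) (ht : 0 ≤ t) {p : ℕ}
    (hp : p ≠ 0) (hX : ∫ ω, X ω ^ p ∂μ ≤ (a * p) ^ p) :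
    (∫ ω, (t * X ω) ^ p ∂μ) / p ! ≤ (Real.exp 1 * (a * t)) ^ p / 2 := calc
  (∫ ω, (t * X ω) ^ p ∂μ) / p ! = t ^ p * (∫ ω, X ω ^ p ∂μ) / p ! := by
    simp_rw [mul_pow, integral_const_mul]
  _ ≤ t ^ p * (a * p) ^ p / p ! := by gcongr
  _ = (a * t * p) ^ p / p ! := by rw [← mul_pow]; ring
  _ ≤ (Real.exp 1 * (a * t)) ^ p / 2 := mul_natCast_pow_div_factorial_le (by positivity) hp

lemma integrable_cosh_of_summable_integral_even_pow
    (hX : ∀ m : ℕ, Integrable (fun ω => X ω ^ (2 * m)) μ)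
    (hsum : Summable fun m : ℕ => (∫ ω, X ω ^ (2 * m) ∂μ) / (2 * m)!) :
    Integrable (fun ω => Real.cosh (X ω)) μ := by
  have norm_term (m : ℕ) (ω : Ω) :
      ‖X ω ^ (2 * m) / (2 * m)!‖ = X ω ^ (2 * m) / (2 * m)! :=
    Real.norm_of_nonneg (div_nonneg ((even_two_mul m).pow_nonneg _) (Nat.cast_nonneg _))
  refine integrable_of_hasSum_of_summable_integral_norm
    (F := fun m ω => X ω ^ (2 * m) / (2 * m)!) (fun m => (hX m).div_const _) ?_
    (ae_of_all μ fun ω => Real.hasSum_cosh (X ω))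
  simpa only [norm_term, integral_div] using hsum

lemma hasSum_integral_pow_div_factorial (hX : AEStronglyMeasurable X μ)
    (hcosh : Integrable (fun ω => Real.cosh (X ω)) μ) :
    HasSum (fun p : ℕ => (∫ ω, X ω ^ p ∂μ) / p !) (∫ ω, Real.exp (X ω) ∂μ) := by
  have hasSum_exp (y : ℝ) : HasSum (fun p : ℕ => y ^ p / p !) (Real.exp y) :=
    Real.exp_eq_exp_ℝ ▸ NormedSpace.expSeries_div_hasSum_exp y
  have integrable_exp_abs : Integrable (fun ω => Real.exp |X ω|) μ := by
    refine (hcosh.const_mul 2).mono' (Real.continuous_exp.comp_aestronglyMeasurable hX.norm)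
      (ae_of_all μ fun ω => ?_)
    calc ‖Real.exp |X ω|‖ = Real.exp |X ω| := Real.norm_of_nonneg (Real.exp_nonneg _)
      _ ≤ Real.exp (X ω) + Real.exp (-X ω) := Real.exp_abs_le _
      _ = 2 * Real.cosh (X ω) := by rw [Real.cosh_eq]; ring
  simp_rw [← integral_div]
  refine hasSum_integral_of_dominated_convergence (fun p ω => |X ω| ^ p / p !)
    (fun p => by fun_prop) (fun p => ae_of_all μ fun ω => ?_)
    (ae_of_all μ fun ω => (hasSum_exp |X ω|).summable) ?_ (ae_of_all μ fun ω => hasSum_exp (X ω))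
  · simp only [norm_div, norm_pow, Real.norm_eq_abs, Nat.abs_cast, le_refl]
  · simpa only [(hasSum_exp _).tsum_eq] using integrable_exp_abs

lemma integral_exp_le_of_integral_pow_div_factorial_le {c x : ℝ}
    (hX : ∀ p : ℕ, Integrable (fun ω => X ω ^ p) μ) (hx0 : 0 ≤ x) (hx1 : x < 1)
    (hle : ∀ p : ℕ, 2 ≤ p → (∫ ω, X ω ^ p ∂μ) / p ! ≤ c * x ^ p) :
    ∫ ω, Real.exp (X ω) ∂μ ≤ μ.real Set.univ + ∫ ω, X ω ∂μ + c * x ^ 2 / (1 - x) := by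
  have summable_even : Summable fun m : ℕ => (∫ ω, X ω ^ (2 * m) ∂μ) / (2 * m)! := by
    have summable_geometric : Summable fun m : ℕ => c * x ^ (2 * (m + 1)) :=
      ((summable_geometric_of_lt_one hx0 hx1).mul_left c).comp_injective
        (i := fun m : ℕ => 2 * (m + 1)) fun m n h => by simpa using h
    refine (summable_nat_add_iff 1).mp (summable_geometric.of_nonneg_of_le (fun m => ?_)
      fun m => hle (2 * (m + 1)) (by lia))
    exact div_nonneg (integral_nonneg fun ω => (even_two_mul _).pow_nonneg _) (Nat.cast_nonneg _)
  have hX_meas : AEStronglyMeasurable X μ := by simpa using (hX 1).aestronglyMeasurable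
  have hasSum_moments := hasSum_integral_pow_div_factorial hX_meas
    (integrable_cosh_of_summable_integral_even_pow (fun m => hX (2 * m)) summable_even)
  simpa [Finset.sum_range_succ] using
    le_sum_range_add_geometric_of_hasSum hasSum_moments hx0 hx1 hle

end ExponentialSeries

theorem mgf_bound_of_moments_general {Ω : Type*} [MeasurableSpace Ω]
    (μ : Measure Ω) [IsProbabilityMeasure μ]
    (B : Ω → ℝ) (hint : ∀ p : ℕ, Integrable (fun ω => B ω ^ p) μ)
    (K : ℝ) (hK : 0 < K)
    (hmom : ∀ p : ℕ, 2 ≤ p → ∫ ω, B ω ^ p ∂μ ≤ (2 * K * (p : ℝ)) ^ p)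
    (t : ℝ) (ht0 : 0 ≤ t) (ht1 : t ≤ 1 / (4 * Real.exp 1 * K)) :
    ∫ ω, Real.exp (t * B ω) ∂μ ≤
      Real.exp (t * ∫ ω, B ω ∂μ + 4 * Real.exp 1 ^ 2 * t ^ 2 * K ^ 2) := by
  set x : ℝ := Real.exp 1 * (2 * K * t) with hx
  have hx0 : 0 ≤ x := by positivity
  have hx1 : x ≤ 1 / 2 := by
    rw [le_div_iff₀ (by positivity)] at ht1
    linarith
  have moment_le (p : ℕ) (hp : 2 ≤ p) : (∫ ω, (t * B ω) ^ p ∂μ) / p ! ≤ 1 / 2 * x ^ p :=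
    (integral_const_mul_pow_div_factorial_le (by positivity) ht0 (by lia) (hmom p hp)).trans_eq
      (by ring)
  have tail_le : 1 / 2 * x ^ 2 / (1 - x) ≤ x ^ 2 := by
    rw [div_le_iff₀ (by linarith)]
    nlinarith [sq_nonneg x]
  calc ∫ ω, Real.exp (t * B ω) ∂μ
      ≤ 1 + t * ∫ ω, B ω ∂μ + 1 / 2 * x ^ 2 / (1 - x) := by
        simpa [integral_const_mul] using integral_exp_le_of_integral_pow_div_factorial_le
          (fun p => by simpa only [mul_pow] using (hint p).const_mul (t ^ p))
          hx0 (by linarith) moment_le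
    _ ≤ (t * ∫ ω, B ω ∂μ + x ^ 2) + 1 := by linarith
    _ ≤ Real.exp (t * ∫ ω, B ω ∂μ + x ^ 2) := Real.add_one_le_exp _
    _ = Real.exp (t * ∫ ω, B ω ∂μ + 4 * Real.exp 1 ^ 2 * t ^ 2 * K ^ 2) := by rw [hx]; ring_nf

/-- Let `B` be a centered real random variable with
`E[B^p] ≤ (2Kp)^p` for every integer `p ≥ 2`, where `K > 0`.  Then for every
`0 ≤ t ≤ 1/(4eK)`, `E[exp(tB)] ≤ exp(4 e² t² K²)`. -/
theorem mgf_bound_of_moments {Ω : Type*} [MeasurableSpace Ω]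
    (μ : Measure Ω) [IsProbabilityMeasure μ]
    (B : Ω → ℝ) (hmeas : Measurable B)
    (hint : ∀ p : ℕ, Integrable (fun ω => B ω ^ p) μ)
    (K : ℝ) (hK : 0 < K)
    (hmean : ∫ ω, B ω ∂μ = 0)
    (hmom : ∀ p : ℕ, 2 ≤ p → ∫ ω, B ω ^ p ∂μ ≤ (2 * K * (p : ℝ)) ^ p)
    (t : ℝ) (ht0 : 0 ≤ t) (ht1 : t ≤ 1 / (4 * Real.exp 1 * K)) :
    ∫ ω, Real.exp (t * B ω) ∂μ ≤ Real.exp (4 * Real.exp 1 ^ 2 * t ^ 2 * K ^ 2) := by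
  simpa [hmean] using mgf_bound_of_moments_general μ B hint K hK hmom t ht0 ht1
end
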